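/- Let ε_d, ε'_d > 0 be chosen for every dimension d so that the Lebesgue volume of the Euclidean ball B_{2,d}(ε_d) equals the Lebesgue volume of the ℓ∞ ball B_{∞,d}(ε'_d). Then the ratio Vol(B_{2,d}(ε_d) ∩ B_{∞,d}(ε'_d)) / Vol(B_{∞,d}(ε'_d)) tends to 0 as d → ∞. -/

import Mathlib

open MeasureTheory Filter

/-!
Under the uniform distribution on the cube `[-a, a]^n` the squared norm has mean `n * a ^ 2 / 3`
and, being a sum of independent bounded variables, concentrates around it (Hoeffding). By Stirling,
the ball with the same volume as the cube has squared radius `(2 / (π * e) + o(1)) * n * a ^ 2`,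
and `2 / (π * e) < 1 / 3`, so it captures only an exponentially small part of the cube. The slack
between these constants allows the growth rate `1 / e` in Stirling's formula to be replaced by
`1 / 2`.
-/

open ProbabilityTheory Set

section Gamma

open Real

theorem rpow_mul_exp_neg_mul_le {s θ x : ℝ} (hs : 0 < s) (hθ : 0 < θ) (hx : 0 ≤ x) :
    x ^ s * exp (-(θ * x)) ≤ (s / θ * exp (-1)) ^ s := by
  have hbase : x * exp (-(θ * x / s)) ≤ s / θ * exp (-1) := by
    calc x * exp (-(θ * x / s)) = s / θ * (θ * x / s * exp (-(θ * x / s))) := by field_simp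
      _ ≤ s / θ * exp (-1) := by gcongr; exact mul_exp_neg_le_exp_neg_one _
  calc x ^ s * exp (-(θ * x)) = (x * exp (-(θ * x / s))) ^ s := by
        rw [mul_rpow hx (exp_pos _).le, ← exp_mul]
        congr 2
        field_simp
    _ ≤ (s / θ * exp (-1)) ^ s := by gcongr

theorem Gamma_add_one_le_rpow_div {s θ : ℝ} (hs : 0 < s) (hθ₀ : 0 < θ) (hθ₁ : θ < 1) :
    Gamma (s + 1) ≤ (s / θ * exp (-1)) ^ s / (1 - θ) := by
  -- `exp (-θ x)` keeps `x ^ s` bounded, which leaves `exp (-(1 - θ) x)` to be integrated.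
  have hdecay : -(1 - θ) < 0 := by linarith
  calc Gamma (s + 1) = ∫ x in Ioi 0, exp (-x) * x ^ (s + 1 - 1) :=
        Gamma_eq_integral (by linarith)
    _ ≤ ∫ x in Ioi 0, (s / θ * exp (-1)) ^ s * exp (-(1 - θ) * x) := by
        refine setIntegral_mono_on (GammaIntegral_convergent (by linarith))
          ((integrableOn_exp_mul_Ioi hdecay 0).const_mul _) measurableSet_Ioi fun x hx => ?_
        calc exp (-x) * x ^ (s + 1 - 1) = x ^ s * exp (-(θ * x)) * exp (-(1 - θ) * x) := by
              rw [add_sub_cancel_right, mul_assoc, ← exp_add, mul_comm]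
              ring_nf
          _ ≤ _ := by
              gcongr
              exact rpow_mul_exp_neg_mul_le hs hθ₀ (le_of_lt hx)
    _ = (s / θ * exp (-1)) ^ s / (1 - θ) := by
        rw [integral_const_mul, integral_exp_mul_Ioi hdecay 0, mul_zero, exp_zero, neg_div_neg_eq,
          mul_one_div]

theorem eventually_Gamma_add_one_le_rpow {b : ℝ} (hb : exp (-1) < b) :
    ∀ᶠ s in atTop, Gamma (s + 1) ≤ (b * s) ^ s := by
  have hb₀ : 0 < b := (exp_pos _).trans hb
  obtain ⟨θ, hθb, hθ₁⟩ := exists_between ((div_lt_one hb₀).2 hb)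
  have hθ₀ : 0 < θ := lt_trans (by positivity) hθb
  have hratio : exp (-1) / (θ * b) < 1 := by
    rwa [div_lt_one (by positivity), ← div_lt_iff₀ hb₀]
  have hsmall : ∀ᶠ s : ℝ in atTop, (exp (-1) / (θ * b)) ^ s < 1 - θ :=
    (tendsto_rpow_atTop_of_base_lt_one _ (by linarith [show 0 < exp (-1) / (θ * b) by positivity])
      hratio).eventually_lt_const (by linarith)
  filter_upwards [hsmall, eventually_gt_atTop 0] with s hs hs₀
  refine (Gamma_add_one_le_rpow_div hs₀ hθ₀ hθ₁).trans ((div_le_iff₀ (by linarith)).2 ?_)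
  calc (s / θ * exp (-1)) ^ s = (b * s) ^ s * (exp (-1) / (θ * b)) ^ s := by
        rw [← mul_rpow (by positivity) (by positivity)]
        congr 1
        field_simp
    _ ≤ (b * s) ^ s * (1 - θ) := by gcongr

end Gamma

section Product

variable {ι : Type*} [Fintype ι]

theorem pi_cond {α : ι → Type*} [∀ i, MeasurableSpace (α i)] (μ : ∀ i, Measure (α i))
    [∀ i, SigmaFinite (μ i)] {s : ∀ i, Set (α i)} (hs : ∀ i, μ i (s i) ≠ ⊤) :
    Measure.pi (fun i => (μ i)[|s i]) = (Measure.pi μ)[|univ.pi s] := by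
  refine Measure.pi_eq fun t ht => ?_
  rw [cond_apply' (MeasurableSet.univ_pi ht), ← pi_inter_distrib, Measure.pi_pi, Measure.pi_pi,
    ENNReal.prod_inv_distrib fun i _ j _ _ => Or.inr (hs j), ← Finset.prod_mul_distrib]
  exact Finset.prod_congr rfl fun i _ => (cond_apply' (ht i) (μ i)).symm

theorem measureReal_pi_sum_le_le_exp {Ω : Type*} [MeasurableSpace Ω] {μ : Measure Ω}
    [IsProbabilityMeasure μ] {f : Ω → ℝ} {l u t : ℝ} (hf : AEMeasurable f μ)
    (hlu : ∀ᵐ ω ∂μ, f ω ∈ Icc l u) (ht : 0 ≤ t) :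
    (Measure.pi fun _ : ι => μ).real {x | ∑ i, f (x i) ≤ Fintype.card ι * (μ[f] - t)}
      ≤ Real.exp (-(2 * Fintype.card ι * t ^ 2) / (u - l) ^ 2) := by
  have hindep : iIndepFun (fun i (x : ι → Ω) => -(f (x i) - μ[f])) (Measure.pi fun _ => μ) :=
    iIndepFun_pi (X := fun _ ω => -(f ω - μ[f])) fun _ => (hf.sub_const _).neg
  have hsubG (i : ι) : HasSubgaussianMGF (fun x : ι → Ω => -(f (x i) - μ[f]))
      ((‖u - l‖₊ / 2) ^ 2) (Measure.pi fun _ => μ) := by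
    have heval : MeasurePreserving (fun x : ι → Ω => x i) (Measure.pi fun _ => μ) μ :=
      measurePreserving_eval _ i
    have hmap : HasSubgaussianMGF (fun ω => -(f ω - μ[f])) ((‖u - l‖₊ / 2) ^ 2)
        ((Measure.pi fun _ : ι => μ).map fun x => x i) := by
      rw [heval.map_eq]
      exact (hasSubgaussianMGF_of_mem_Icc hf hlu).neg
    exact (hmap.of_map heval.aemeasurable :)
  have hparam : (∑ _i : ι, (‖u - l‖₊ / 2) ^ 2 : NNReal) = Fintype.card ι * ((u - l) / 2) ^ 2 := by
    simp [div_pow]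
  have hoeffding := HasSubgaussianMGF.measure_sum_ge_le_of_iIndepFun hindep
    (s := Finset.univ) (fun i _ => hsubG i) (ε := Fintype.card ι * t) (by positivity)
  convert hoeffding using 2
  · ext x
    simp only [mem_ofPred_eq, neg_sub, Finset.sum_sub_distrib, Finset.sum_const, Finset.card_univ,
      nsmul_eq_mul]
    constructor <;> intro h <;> linarith
  · rw [hparam]
    obtain _ | _ := isEmpty_or_nonempty ι
    · simp
    · field_simp

end Product

section Cube

theorem toLp_preimage_cube {ι : Type*} (a : ℝ) :
    WithLp.toLp 2 ⁻¹' {x : EuclideanSpace ℝ ι | ∀ i, |x i| ≤ a} = univ.pi fun _ => Icc (-a) a := by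
  ext x
  simp [abs_le, Pi.le_def, forall_and]

theorem integral_sq_cond_Icc {a : ℝ} (ha : 0 < a) :
    ∫ x, x ^ 2 ∂(volume[|Icc (-a) a] : Measure ℝ) = a ^ 2 / 3 := by
  rw [ProbabilityTheory.cond, integral_smul_measure, integral_Icc_eq_integral_Ioc,
    ← intervalIntegral.integral_of_le (by linarith), integral_pow, Real.volume_Icc]
  simp only [sub_neg_eq_add, ENNReal.toReal_inv, nonneg_add_self_iff, ha.le,
    ENNReal.toReal_ofReal, Nat.reduceAdd, Nat.cast_ofNat, smul_eq_mul]
  field_simp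
  ring

variable {ι : Type*} [Fintype ι]

theorem volume_toLp_preimage (s : Set (EuclideanSpace ℝ ι)) :
    volume (WithLp.toLp 2 ⁻¹' s) = volume s :=
  (EuclideanSpace.volume_preserving_symm_measurableEquiv_toLp ι).symm.measure_preimage_equiv s

theorem volume_cube (a : ℝ) :
    volume {x : EuclideanSpace ℝ ι | ∀ i, |x i| ≤ a} = ENNReal.ofReal (2 * a) ^ Fintype.card ι := by
  rw [← volume_toLp_preimage, toLp_preimage_cube, volume_pi_pi]
  simp [two_mul]

theorem volume_inter_cube_div (s : Set (EuclideanSpace ℝ ι)) (a : ℝ) :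
    volume (s ∩ {x | ∀ i, |x i| ≤ a}) / volume {x : EuclideanSpace ℝ ι | ∀ i, |x i| ≤ a}
      = Measure.pi (fun _ : ι => volume[|Icc (-a) a]) (WithLp.toLp 2 ⁻¹' s) := by
  rw [pi_cond _ fun _ => measure_Icc_lt_top.ne, ← volume_pi,
    cond_apply (MeasurableSet.univ_pi fun _ => measurableSet_Icc), ← toLp_preimage_cube,
    ← preimage_inter, volume_toLp_preimage, volume_toLp_preimage, inter_comm, mul_comm,
    div_eq_mul_inv]

theorem volume_norm_sq_le_inter_cube_div_le_exp {a c : ℝ} (ha : 0 < a) (hc : c ≤ 1 / 3) :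
    volume ({x : EuclideanSpace ℝ ι | ‖x‖ ^ 2 ≤ c * Fintype.card ι * a ^ 2} ∩ {x | ∀ i, |x i| ≤ a})
        / volume {x : EuclideanSpace ℝ ι | ∀ i, |x i| ≤ a}
      ≤ ENNReal.ofReal (Real.exp (-(2 * Fintype.card ι * (1 / 3 - c) ^ 2))) := by
  have : IsProbabilityMeasure (volume[|Icc (-a) a] : Measure ℝ) :=
    cond_isProbabilityMeasure_of_finite (by simp [ha]) measure_Icc_lt_top.ne
  have hmem : ∀ᵐ x ∂(volume[|Icc (-a) a] : Measure ℝ), x ^ 2 ∈ Icc 0 (a ^ 2) :=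
    ae_cond_of_forall_mem measurableSet_Icc fun x hx => ⟨sq_nonneg x, sq_le_sq' hx.1 hx.2⟩
  have hoeffding := measureReal_pi_sum_le_le_exp (ι := ι) (t := (1 / 3 - c) * a ^ 2)
    (by fun_prop) hmem (mul_nonneg (by linarith) (sq_nonneg a))
  rw [integral_sq_cond_Icc ha] at hoeffding
  rw [volume_inter_cube_div, ← ofReal_measureReal]
  refine ENNReal.ofReal_le_ofReal ?_
  convert hoeffding using 2
  · ext x
    simp only [EuclideanSpace.norm_sq_eq, Real.norm_eq_abs, sq_abs, mem_preimage, mem_ofPred_eq]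
    ring_nf
  · field_simp
    ring

theorem radius_le_of_volume_le_volume_cube [Nonempty ι] {a b r : ℝ} (ha : 0 ≤ a) (hb : 0 ≤ b)
    (hΓ : Real.Gamma (Fintype.card ι / 2 + 1) ≤
      (b * (Fintype.card ι / 2)) ^ (Fintype.card ι / 2 : ℝ))
    (hvol : volume {x : EuclideanSpace ℝ ι | ‖x‖ ≤ r} ≤
      volume {x : EuclideanSpace ℝ ι | ∀ i, |x i| ≤ a}) :
    r ≤ √(2 * b / Real.pi * Fintype.card ι) * a := by
  obtain hr | hr := le_total r 0
  · exact hr.trans (by positivity)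
  set n := Fintype.card ι
  have hΓ₀ : 0 < Real.Gamma (n / 2 + 1) := Real.Gamma_pos_of_pos (by positivity)
  have hball : {x : EuclideanSpace ℝ ι | ‖x‖ ≤ r} = Metric.closedBall 0 r := by
    ext x
    simp
  rw [hball, EuclideanSpace.volume_closedBall, volume_cube, ← ENNReal.ofReal_pow hr,
    ← ENNReal.ofReal_pow (by positivity), ← ENNReal.ofReal_mul (by positivity),
    ENNReal.ofReal_le_ofReal_iff (by positivity), ← mul_div_assoc, div_le_iff₀ hΓ₀] at hvol
  have hpow : (r * √Real.pi) ^ n ≤ (2 * a * √(b * (n / 2))) ^ n := by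
    calc (r * √Real.pi) ^ n = r ^ n * √Real.pi ^ n := mul_pow ..
      _ ≤ (2 * a) ^ n * Real.Gamma (n / 2 + 1) := hvol
      _ ≤ (2 * a) ^ n * (b * (n / 2)) ^ (n / 2 : ℝ) := by gcongr
      _ = (2 * a * √(b * (n / 2))) ^ n := by
        rw [Real.rpow_div_two_eq_sqrt _ (by positivity), Real.rpow_natCast, mul_pow _ √_]
  have hroot : r * √Real.pi ≤ 2 * a * √(b * (n / 2)) :=
    le_of_pow_le_pow_left₀ Fintype.card_ne_zero (by positivity) hpow
  calc r ≤ 2 * a * √(b * (n / 2)) / √Real.pi := (le_div_iff₀ (by positivity)).2 hroot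
    _ = √(2 ^ 2 * (b * (n / 2)) / Real.pi) * a := by
      rw [Real.sqrt_div (by positivity), Real.sqrt_mul (sq_nonneg 2),
        Real.sqrt_sq zero_le_two]
      ring
    _ = √(2 * b / Real.pi * n) * a := by ring_nf

end Cube

section Asymptotics

variable {ε ε' : ℕ → ℝ}

theorem eventually_radius_le_of_volume_le_volume_cube {b : ℝ} (hb : Real.exp (-1) < b)
    (hε' : ∀ d, 0 ≤ ε' d)
    (hvol : ∀ d, volume {x : EuclideanSpace ℝ (Fin d) | ‖x‖ ≤ ε d}
      ≤ volume {x : EuclideanSpace ℝ (Fin d) | ∀ i, |x i| ≤ ε' d}) :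
    ∀ᶠ d in atTop, ε d ≤ √(2 * b / Real.pi * d) * ε' d := by
  have hΓ : ∀ᶠ d : ℕ in atTop, Real.Gamma (d / 2 + 1) ≤ (b * (d / 2)) ^ (d / 2 : ℝ) :=
    (tendsto_natCast_atTop_atTop.atTop_div_const two_pos).eventually
      (eventually_Gamma_add_one_le_rpow hb)
  filter_upwards [hΓ, eventually_ne_atTop 0] with d hΓd hd
  have : NeZero d := ⟨hd⟩
  simpa only [Fintype.card_fin] using radius_le_of_volume_le_volume_cube (hε' d)
    ((Real.exp_pos _).trans hb).le (by simpa only [Fintype.card_fin] using hΓd) (hvol d)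

theorem tendsto_volume_ball_inter_cube_div {c : ℝ} (hc₀ : 0 ≤ c) (hc : c < 1 / 3)
    (hε' : ∀ d, 0 < ε' d) (hε : ∀ᶠ d in atTop, ε d ≤ √(c * d) * ε' d) :
    Tendsto (fun d : ℕ =>
      volume ({x : EuclideanSpace ℝ (Fin d) | ‖x‖ ≤ ε d}
          ∩ {x : EuclideanSpace ℝ (Fin d) | ∀ i, |x i| ≤ ε' d})
        / volume {x : EuclideanSpace ℝ (Fin d) | ∀ i, |x i| ≤ ε' d})
      atTop (nhds 0) := by
  have hlinear : Tendsto (fun d : ℕ => 2 * d * (1 / 3 - c) ^ 2) atTop atTop :=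
    (tendsto_natCast_atTop_atTop.const_mul_atTop two_pos).atTop_mul_const
      (pow_pos (sub_pos.2 hc) 2)
  have hexp : Tendsto (fun d : ℕ => ENNReal.ofReal (Real.exp (-(2 * d * (1 / 3 - c) ^ 2))))
      atTop (nhds 0) := by
    simpa using ENNReal.tendsto_ofReal (Real.tendsto_exp_neg_atTop_nhds_zero.comp hlinear)
  refine tendsto_of_tendsto_of_tendsto_of_le_of_le' tendsto_const_nhds hexp
    (Eventually.of_forall fun _ => zero_le) ?_
  filter_upwards [hε] with d hεd
  have hball : {x : EuclideanSpace ℝ (Fin d) | ‖x‖ ≤ ε d} ⊆ {x | ‖x‖ ^ 2 ≤ c * d * ε' d ^ 2} := by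
    intro x hx
    calc ‖x‖ ^ 2 ≤ (√(c * d) * ε' d) ^ 2 := by gcongr; exact le_trans hx hεd
      _ = c * d * ε' d ^ 2 := by rw [mul_pow, Real.sq_sqrt (by positivity)]
  calc _ ≤ volume ({x : EuclideanSpace ℝ (Fin d) | ‖x‖ ^ 2 ≤ c * d * ε' d ^ 2}
          ∩ {x | ∀ i, |x i| ≤ ε' d}) / volume {x : EuclideanSpace ℝ (Fin d) | ∀ i, |x i| ≤ ε' d} :=
        ENNReal.div_le_div_right (measure_mono (inter_subset_inter_left _ hball)) _
    _ ≤ ENNReal.ofReal (Real.exp (-(2 * d * (1 / 3 - c) ^ 2))) := by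
        simpa only [Fintype.card_fin] using
          volume_norm_sq_le_inter_cube_div_le_exp (ι := Fin d) (hε' d) hc.le

end Asymptotics

theorem volume_ratio_inter_ball_tendsto_zero_general
    (ε ε' : ℕ → ℝ) (hε' : ∀ d, 0 < ε' d)
    (hvol : ∀ d, volume {x : EuclideanSpace ℝ (Fin d) | ‖x‖ ≤ ε d}
      ≤ volume {x : EuclideanSpace ℝ (Fin d) | ∀ i, |x i| ≤ ε' d}) :
    Tendsto (fun d : ℕ =>
      volume ({x : EuclideanSpace ℝ (Fin d) | ‖x‖ ≤ ε d}
          ∩ {x : EuclideanSpace ℝ (Fin d) | ∀ i, |x i| ≤ ε' d})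
        / volume {x : EuclideanSpace ℝ (Fin d) | ∀ i, |x i| ≤ ε' d})
      atTop (nhds 0) := by
  have hradius : ∀ᶠ d in atTop, ε d ≤ √(2 * (1 / 2) / Real.pi * d) * ε' d :=
    eventually_radius_le_of_volume_le_volume_cube (by linarith [Real.exp_neg_one_lt_half])
      (fun d => (hε' d).le) hvol
  have hgap : 2 * (1 / 2) / Real.pi < 1 / 3 := by
    rw [mul_one_div_cancel two_ne_zero]
    exact one_div_lt_one_div_of_lt three_pos Real.pi_gt_three
  exact tendsto_volume_ball_inter_cube_div (by positivity) hgap hε' hradius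

/-- If for every dimension `d` the radii `ε d, ε' d > 0` are chosen so that the
Lebesgue volume of the Euclidean ball `B_{2,d}(ε d)` equals the Lebesgue volume of the
`ℓ∞` ball `B_{∞,d}(ε' d)`, then
`Vol(B_{2,d}(ε d) ∩ B_{∞,d}(ε' d)) / Vol(B_{∞,d}(ε' d)) → 0` as `d → ∞`. -/
theorem volume_ratio_inter_ball_tendsto_zero
    (ε ε' : ℕ → ℝ) (hε : ∀ d, 0 < ε d) (hε' : ∀ d, 0 < ε' d)
    (hvol : ∀ d, volume {x : EuclideanSpace ℝ (Fin d) | ‖x‖ ≤ ε d}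
      = volume {x : EuclideanSpace ℝ (Fin d) | ∀ i, |x i| ≤ ε' d}) :
    Tendsto (fun d : ℕ =>
      volume ({x : EuclideanSpace ℝ (Fin d) | ‖x‖ ≤ ε d}
          ∩ {x : EuclideanSpace ℝ (Fin d) | ∀ i, |x i| ≤ ε' d})
        / volume {x : EuclideanSpace ℝ (Fin d) | ∀ i, |x i| ≤ ε' d})
      atTop (nhds 0) :=
  volume_ratio_inter_ball_tendsto_zero_general ε ε' hε' fun d => (hvol d).le
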